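/- Let p be a prime, m a positive integer, e and k integers with e ≥ 2 and 1 ≤ k ≤ e−1, and b an integer with b ≥ 2. Let i be an integer with 0 ≤ i ≤ p^{e−k−1} such that b + i ≤ p^{e−k} and i ≤ b. Then the cyclic code C_{p^e − p^{e−k} + i} = ⟨(x−1)^{p^e − p^{e−k} + i}⟩ ⊆ 𝔽_{p^m}[x]/⟨x^{p^e}−1⟩ satisfies d_b(C_{p^e − p^{e−k} + i}) = p^k (b + i). -/

import Mathlib

open Polynomial

/-- The `b`-symbol read vector of `x ∈ Ξ^n`: its `i`-th entry is the `b`-tuple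
`(x_i, x_{i+1}, …, x_{i+b-1})`, indices modulo `n`. -/
def piB {Ξ : Type*} {n : ℕ} (b : ℕ) (x : Fin n → Ξ) : Fin n → (Fin b → Ξ) :=
  fun i j => x ⟨((i : ℕ) + (j : ℕ)) % n, Nat.mod_lt _ i.pos⟩

/-- The cyclic code `C_i = ⟨(x-1)^i⟩ ⊆ 𝔽_{p^m}[x]/⟨x^{p^e}-1⟩` of length `p^e`
over `𝔽_{p^m}`, viewed as the set of coefficient vectors `c ∈ 𝔽_{p^m}^{p^e}`
whose associated polynomial is congruent to a multiple of `(x-1)^i` modulo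
`x^{p^e} - 1`. -/
noncomputable def Ccode (p m e : ℕ) [Fact p.Prime] (i : ℕ) :
    Set (Fin (p ^ e) → GaloisField p m) :=
  {c | ∃ f : Polynomial (GaloisField p m),
    (X ^ (p ^ e) - 1 : Polynomial (GaloisField p m)) ∣
      ((∑ j : Fin (p ^ e), Polynomial.C (c j) * X ^ (j : ℕ)) - (X - 1) ^ i * f)}

/-- The minimum `b`-symbol distance of a code `C ⊆ F^n`. -/
noncomputable def dBcode {F : Type*} {n : ℕ} (b : ℕ) (Cc : Set (Fin n → F)) : ℕ :=
  letI := Classical.decEq F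
  sInf {d | ∃ x ∈ Cc, ∃ y ∈ Cc, x ≠ y ∧ d = hammingDist (piB b x) (piB b y)}

/-!
In characteristic `p`, `(X - 1) ^ (p ^ e - p ^ (e - k))` is the geometric sum
`1 + X ^ N + ⋯ + X ^ ((p ^ k - 1) * N)` with `N = p ^ (e - k)`. Hence the code generated by
`(X - 1) ^ (p ^ e - p ^ (e - k) + i)` is the `p ^ k`-fold repetition of the cyclic code of length
`N` generated by `(X - 1) ^ i`, and its `b`-distance is `p ^ k` times that of the latter.

A cyclic code of length `N` with monic generator polynomial `g` of degree `r ≤ b` and `b + r ≤ N`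
has `b`-distance `b + r`, attained by `g` itself. Indeed, if some length-`b` window of a nonzero
codeword vanishes, rotate it to the front. As `g` is coprime to `X`, the first and last nonzero
positions `l` and `h` satisfy `l + r ≤ h`, so the `b` windows starting in `(l - b, l]` and the `r`
windows starting in `(h - r, h]` are distinct and nonzero.
-/

section Hamming

variable {ι α : Type*} [Fintype ι] [DecidableEq α] {N : ℕ}

lemma hammingNorm_comp_perm [Zero α] (σ : Equiv.Perm ι) (x : ι → α) :
    hammingNorm (fun j => x (σ j)) = hammingNorm x :=
  Finset.card_equiv σ (by simp)

lemma hammingDist_repeat (q : ℕ) (x y : Fin N → α) :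
    hammingDist (Fin.repeat q x) (Fin.repeat q y) = q * hammingDist x y := by
  calc hammingDist (Fin.repeat q x) (Fin.repeat q y)
    _ = ((Finset.univ : Finset (Fin q)) ×ˢ Finset.univ.filter fun t => x t ≠ y t).card :=
        Finset.card_equiv finProdFinEquiv.symm fun _ => by
          rw [Finset.mem_filter]
          simp
    _ = q * hammingDist x y := by simp [hammingDist]

lemma hammingNorm_le_card [Zero α] {x : Fin N → α} {A : Finset ℕ}
    (hA : ∀ j, x j ≠ 0 → (j : ℕ) ∈ A) : hammingNorm x ≤ A.card :=
  Finset.card_le_card_of_injOn Fin.val (by simpa [Set.MapsTo] using hA) Fin.val_injective.injOn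

lemma card_le_hammingNorm [Zero α] {x : Fin N → α} {A : Finset ℕ}
    (hA : ∀ j ∈ A, ∃ hj : j < N, x ⟨j, hj⟩ ≠ 0) : A.card ≤ hammingNorm x := by
  refine Finset.card_le_card_of_surjOn Fin.val fun j hj => ?_
  obtain ⟨hjN, hxj⟩ := hA j hj
  exact ⟨⟨j, hjN⟩, by simpa using hxj, rfl⟩

end Hamming

section ReadVector

variable {α : Type*} {N b : ℕ}

lemma piB_repeat (q b : ℕ) (x : Fin N → α) :
    piB b (Fin.repeat q x) = Fin.repeat q (piB b x) := by
  ext j t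
  simp [piB, Fin.modNat]

lemma piB_add_right [NeZero N] (b : ℕ) (x : Fin N → α) (u j : Fin N) :
    piB b (fun j => x (j + u)) j = piB b x (j + u) := by
  ext t
  refine congrArg x (Fin.ext ?_)
  simp [Fin.val_add, add_right_comm]

variable [Zero α]

lemma piB_ne_zero {x : Fin N → α} {w : Fin N} (hw : x w ≠ 0) {j : ℕ} (hjw : j ≤ w)
    (hwj : w < j + b) : piB b x ⟨j, by omega⟩ ≠ 0 := by
  refine Function.ne_iff.2 ⟨⟨w - j, by omega⟩, ?_⟩
  simpa [piB, Nat.add_sub_cancel' hjw, Nat.mod_eq_of_lt w.isLt] using hw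

variable [DecidableEq α]

lemma hammingNorm_piB_add_right [NeZero N] (b : ℕ) (x : Fin N → α) (u : Fin N) :
    hammingNorm (piB b fun j => x (j + u)) = hammingNorm (piB b x) := by
  rw [← hammingNorm_comp_perm (Equiv.addRight u) (piB b x)]
  exact congrArg hammingNorm (funext (piB_add_right b x u))

lemma add_le_hammingNorm_piB {x : Fin N → α} {l h : Fin N} {r : ℕ} (hl : x l ≠ 0) (hh : x h ≠ 0)
    (hbl : b ≤ l) (hlh : l + r ≤ h) (hrb : r ≤ b) : b + r ≤ hammingNorm (piB b x) := by
  have disjoint : Disjoint (Finset.Ioc (l - b : ℕ) l) (Finset.Ioc (h - r : ℕ) h) := by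
    rw [Finset.disjoint_left]
    intro j hj
    simp only [Finset.mem_Ioc] at hj ⊢
    omega
  calc b + r = (Finset.Ioc (l - b : ℕ) l ∪ Finset.Ioc (h - r : ℕ) h).card := by
        rw [Finset.card_union_of_disjoint disjoint, Nat.card_Ioc, Nat.card_Ioc]
        omega
    _ ≤ hammingNorm (piB b x) := by
        refine card_le_hammingNorm fun j hj => ?_
        rw [Finset.mem_union, Finset.mem_Ioc, Finset.mem_Ioc] at hj
        obtain hj | hj := hj
        · exact ⟨by omega, piB_ne_zero hl hj.2 (by omega)⟩
        · exact ⟨by omega, piB_ne_zero hh hj.2 (by omega)⟩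

end ReadVector

section MinimumDistance

lemma dBcode_eq_sInf {α : Type*} [DecidableEq α] {n : ℕ} (b : ℕ) (C : Set (Fin n → α)) :
    dBcode b C = sInf {d | ∃ x ∈ C, ∃ y ∈ C, x ≠ y ∧ d = hammingDist (piB b x) (piB b y)} := by
  obtain rfl := Subsingleton.elim ‹DecidableEq α› (Classical.decEq α)
  rfl

lemma dBcode_image_repeat {α : Type*} {N q : ℕ} (hq : 0 < q) (b : ℕ) (C : Set (Fin N → α)) :
    dBcode b (Fin.repeat q '' C) = q * dBcode b C := by
  classical
  have repeat_injective : Function.Injective (Fin.repeat q : (Fin N → α) → _) := fun x y h => by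
    have := hammingDist_repeat q x y
    simpa [h, hq.ne'] using this
  set D := {d | ∃ x ∈ C, ∃ y ∈ C, x ≠ y ∧ d = hammingDist (piB b x) (piB b y)} with hD
  have distances_eq :
      {d | ∃ x ∈ Fin.repeat q '' C, ∃ y ∈ Fin.repeat q '' C,
        x ≠ y ∧ d = hammingDist (piB b x) (piB b y)} = (q * ·) '' D := by
    ext d
    constructor
    · rintro ⟨_, ⟨x, hx, rfl⟩, _, ⟨y, hy, rfl⟩, hxy, rfl⟩
      exact ⟨_, ⟨x, hx, y, hy, ne_of_apply_ne _ hxy, rfl⟩,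
        by simp only [piB_repeat, hammingDist_repeat]⟩
    · rintro ⟨_, ⟨x, hx, y, hy, hxy, rfl⟩, rfl⟩
      exact ⟨_, ⟨x, hx, rfl⟩, _, ⟨y, hy, rfl⟩, repeat_injective.ne hxy,
        by simp only [piB_repeat, hammingDist_repeat]⟩
  rw [dBcode_eq_sInf, dBcode_eq_sInf, distances_eq, ← hD]
  obtain hD_empty | hD_nonempty := D.eq_empty_or_nonempty
  · simp [hD_empty]
  · have isLeast_sInf : IsLeast D (sInf D) := ⟨Nat.sInf_mem hD_nonempty, fun _ => Nat.sInf_le⟩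
    exact ((mul_right_mono (a := q)).map_isLeast isLeast_sInf).csInf_eq

lemma dBcode_eq_of_isLeast {G S : Type*} [AddGroup G] [DecidableEq G] {n b d : ℕ}
    [SetLike S (Fin n → G)] [AddSubgroupClass S (Fin n → G)] {C : S}
    (h : IsLeast {w | ∃ x ∈ C, x ≠ 0 ∧ w = hammingNorm (piB b x)} d) :
    dBcode b (C : Set (Fin n → G)) = d := by
  rw [dBcode_eq_sInf, ← h.csInf_eq]
  congr 1
  ext w
  constructor
  · rintro ⟨x, hx, y, hy, hxy, rfl⟩
    exact ⟨-x + y, add_mem (neg_mem hx) hy, neg_add_eq_zero.not.2 hxy,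
      hammingDist_eq_hammingNorm _ _⟩
  · rintro ⟨x, hx, hx0, rfl⟩
    exact ⟨x, hx, 0, zero_mem C, hx0, (hammingDist_zero_right _).symm⟩

end MinimumDistance

section GeneratorPolynomial

variable {R : Type*} [CommRing R] {N q : ℕ} {g P : R[X]}

lemma X_pow_sub_one_dvd_X_pow_sub_X_pow_mod (R : Type*) [CommRing R] (N m : ℕ) :
    (X ^ N - 1 : R[X]) ∣ X ^ m - X ^ (m % N) := by
  have : (X ^ m - X ^ (m % N) : R[X]) = X ^ (m % N) * ((X ^ N) ^ (m / N) - 1) := by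
    rw [mul_sub_one, ← pow_mul, ← pow_add, Nat.mod_add_div]
  rw [this]
  exact (sub_one_dvd_pow_sub_one _ _).mul_left _

lemma isCoprime_X_of_dvd_X_pow_sub_one (hN : 0 < N) (hg : g ∣ X ^ N - 1) : IsCoprime g X := by
  obtain ⟨h, hgh⟩ := hg
  refine ⟨-h, X ^ (N - 1), ?_⟩
  rw [← pow_succ, Nat.sub_add_cancel hN]
  linear_combination hgh

lemma natTrailingDegree_add_natDegree_le_of_dvd (hg : g.Monic) (hgX : IsCoprime g X)
    (hP : P ≠ 0) (hgP : g ∣ P) : P.natTrailingDegree + g.natDegree ≤ P.natDegree := by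
  have := Polynomial.nontrivial_iff.1 ⟨P, 0, hP⟩
  have hX : X ^ P.natTrailingDegree ∣ P :=
    X_pow_dvd_iff.2 fun _ => coeff_eq_zero_of_lt_natTrailingDegree
  have hmonic : (X ^ P.natTrailingDegree * g).Monic := (monic_X_pow _).mul hg
  rw [← natDegree_X_pow (R := R) P.natTrailingDegree, ← (monic_X_pow _).natDegree_mul hg]
  by_contra! hlt
  exact hmonic.not_dvd_of_natDegree_lt hP hlt (hgX.symm.pow_left.mul_dvd hX hgP)

lemma monic_geom_sum_X_pow (R : Type*) [CommRing R] (hN : 0 < N) (hq : 0 < q) :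
    (∑ l ∈ Finset.range q, (X ^ N : R[X]) ^ l).Monic := by
  nontriviality R
  exact (monic_X_pow N).geom_sum (by simpa using hN) hq.ne'

lemma natDegree_geom_sum_X_pow_add (R : Type*) [CommRing R] [Nontrivial R] (hN : 0 < N)
    (hq : 0 < q) : (∑ l ∈ Finset.range q, (X ^ N : R[X]) ^ l).natDegree + N = q * N := by
  have h := congrArg natDegree (geom_sum_mul (X ^ N : R[X]) q)
  rw [← C_1, ← pow_mul, (monic_geom_sum_X_pow R hN hq).natDegree_mul (monic_X_pow_sub_C 1 hN.ne'),
    natDegree_X_pow_sub_C, natDegree_X_pow_sub_C] at h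
  rw [h, mul_comm]

lemma X_pow_char_pow_sub_one (R : Type*) [CommRing R] (p : ℕ) [Fact p.Prime] [CharP R p] (s : ℕ) :
    (X ^ p ^ s - 1 : R[X]) = (X - 1) ^ p ^ s := by
  rw [sub_pow_char_pow, one_pow]

lemma X_sub_one_pow_dvd_X_pow_char_pow_sub_one (R : Type*) [CommRing R] (p : ℕ) [Fact p.Prime]
    [CharP R p] {s i : ℕ} (hi : i ≤ p ^ s) : (X - 1 : R[X]) ^ i ∣ X ^ p ^ s - 1 := by
  rw [X_pow_char_pow_sub_one R p]
  exact pow_dvd_pow _ hi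

lemma geom_sum_X_pow_char_pow (R : Type*) [CommRing R] (p : ℕ) [Fact p.Prime] [CharP R p]
    (s k : ℕ) : ∑ l ∈ Finset.range (p ^ k), (X ^ p ^ s : R[X]) ^ l
      = (X - 1) ^ (p ^ k * p ^ s - p ^ s) := by
  have hle : p ^ s ≤ p ^ k * p ^ s := Nat.le_mul_of_pos_left _ (pow_pos (Fact.out : p.Prime).pos k)
  have hreg : IsRightRegular ((X - 1 : R[X]) ^ p ^ s) := ((monic_X_sub_C 1).pow _).isRegular.right
  refine hreg ?_
  calc (∑ l ∈ Finset.range (p ^ k), (X ^ p ^ s : R[X]) ^ l) * (X - 1) ^ p ^ s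
      = X ^ p ^ (k + s) - 1 := by
        rw [← X_pow_char_pow_sub_one R p, geom_sum_mul, ← pow_mul, ← pow_add, add_comm]
    _ = (X - 1) ^ (p ^ k * p ^ s) := by rw [X_pow_char_pow_sub_one R p, pow_add]
    _ = (X - 1) ^ (p ^ k * p ^ s - p ^ s) * (X - 1) ^ p ^ s := by
        rw [← pow_add (X - 1 : R[X]), Nat.sub_add_cancel hle]

end GeneratorPolynomial

section CyclicCode

variable {R : Type*} [CommRing R] [DecidableEq R] {N q b : ℕ} {g : R[X]}

/-- The code of length `n` over `R` with generator polynomial `g`: the words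
`(c_0, …, c_{n-1})` such that `g` divides `c_0 + c_1 X + ⋯ + c_{n-1} X^{n-1}`. It is cyclic,
and equal to the ideal `⟨g⟩` of `R[X]/⟨X^n - 1⟩`, when `g` divides `X^n - 1`. -/
noncomputable def cyclicCode (n : ℕ) (g : R[X]) : Submodule R (Fin n → R) :=
  ((Ideal.span {g}).restrictScalars R).comap (ofFn n)

lemma mem_cyclicCode {n : ℕ} {c : Fin n → R} : c ∈ cyclicCode n g ↔ g ∣ ofFn n c :=
  Ideal.mem_span_singleton

lemma add_right_mem_cyclicCode [NeZero N] (hg : g ∣ X ^ N - 1) {c : Fin N → R}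
    (hc : c ∈ cyclicCode N g) (u : Fin N) : (fun j => c (j + u)) ∈ cyclicCode N g := by
  rw [mem_cyclicCode] at hc ⊢
  have rotation_congr : X ^ N - 1 ∣ X ^ (u : ℕ) * ofFn N (fun j => c (j + u)) - ofFn N c := by
    rw [ofFn_eq_sum_monomial, ofFn_eq_sum_monomial,
      ← Equiv.sum_comp (Equiv.addRight u) (fun j : Fin N => monomial (j : ℕ) (c j)), Finset.mul_sum,
      ← Finset.sum_sub_distrib]
    refine Finset.dvd_sum fun j _ => ?_
    have := (X_pow_sub_one_dvd_X_pow_sub_X_pow_mod R N (j + u)).mul_left (C (c (j + u)))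
    convert this using 1
    simp only [Equiv.coe_addRight, Fin.val_add, ← C_mul_X_pow_eq_monomial]
    ring
  have dvd_shifted : g ∣ X ^ (u : ℕ) * ofFn N (fun j => c (j + u)) :=
    (dvd_sub_left hc).1 (hg.trans rotation_congr)
  exact (isCoprime_X_of_dvd_X_pow_sub_one (NeZero.pos N) hg).pow_right.dvd_of_dvd_mul_left
    dvd_shifted

lemma add_natDegree_le_hammingNorm_piB (hg : g.Monic) (hgN : g ∣ X ^ N - 1) (hgb : g.natDegree ≤ b)
    (hbN : b + g.natDegree ≤ N) {c : Fin N → R} (hc : c ∈ cyclicCode N g) (hc0 : c ≠ 0) :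
    b + g.natDegree ≤ hammingNorm (piB b c) := by
  by_cases hall : ∀ j, piB b c j ≠ 0
  · simpa [hammingNorm, hall] using hbN
  push Not at hall
  obtain ⟨u, hu⟩ := hall
  have : NeZero N := ⟨u.pos.ne'⟩
  rw [← hammingNorm_piB_add_right b c u]
  set y : Fin N → R := fun j => c (j + u) with hy
  have head_eq_zero : ∀ j : Fin N, (j : ℕ) < b → y j = 0 := fun j hj => by
    have hj_window : y j = piB b c u ⟨j, hj⟩ :=
      congrArg c (Fin.ext (by simp [Fin.val_add, add_comm]))
    rw [hj_window, hu, Pi.zero_apply]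
  have hP : ofFn N y ≠ 0 := by
    rw [Ne, map_eq_zero_iff _ (injective_ofFn N)]
    contrapose hc0
    ext j
    simpa [hy] using congrFun hc0 (j - u)
  have hdeg : (ofFn N y).natDegree < N := ofFn_natDegree_lt (NeZero.one_le) y
  have hspan := natTrailingDegree_add_natDegree_le_of_dvd hg
    (isCoprime_X_of_dvd_X_pow_sub_one (NeZero.pos N) hgN) hP
    (mem_cyclicCode.1 (add_right_mem_cyclicCode hgN hc u))
  have hfirst : y ⟨(ofFn N y).natTrailingDegree, by omega⟩ ≠ 0 := by
    rw [← ofFn_coeff_eq_val_of_lt y]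
    exact trailingCoeff_nonzero_iff_nonzero.2 hP
  have hlast : y ⟨(ofFn N y).natDegree, hdeg⟩ ≠ 0 := by
    rw [← ofFn_coeff_eq_val_of_lt y]
    exact leadingCoeff_ne_zero.2 hP
  refine add_le_hammingNorm_piB hfirst hlast ?_ hspan hgb
  by_contra! hlt
  exact hfirst (head_eq_zero _ hlt)

lemma hammingNorm_piB_toFn_le (hb : 0 < b) (N : ℕ) (g : R[X]) :
    hammingNorm (piB b (toFn N g)) ≤ b + g.natDegree := by
  calc hammingNorm (piB b (toFn N g))
      ≤ (Finset.range (g.natDegree + 1) ∪ Finset.Ioo (N - b) N).card := by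
        refine hammingNorm_le_card fun j hj => ?_
        rw [Finset.mem_union, Finset.mem_range, Finset.mem_Ioo]
        contrapose! hj
        ext t
        have : ((j : ℕ) + t) % N = j + t := Nat.mod_eq_of_lt (by omega)
        simpa [piB, toFn, this] using coeff_eq_zero_of_natDegree_lt (by omega)
    _ ≤ (g.natDegree + 1) + (N - (N - b) - 1) := by
        simpa using Finset.card_union_le (Finset.range (g.natDegree + 1)) (Finset.Ioo (N - b) N)
    _ ≤ b + g.natDegree := by omega

theorem dBcode_cyclicCode [Nontrivial R] (hg : g.Monic) (hgN : g ∣ X ^ N - 1) (hb : 0 < b)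
    (hgb : g.natDegree ≤ b) (hbN : b + g.natDegree ≤ N) :
    dBcode b (cyclicCode N g : Set (Fin N → R)) = b + g.natDegree := by
  have hofFn : ofFn N (toFn N g) = g := ofFn_comp_toFn_eq_id_of_natDegree_lt (by omega)
  have hmem : toFn N g ∈ cyclicCode N g := mem_cyclicCode.2 hofFn.symm.dvd
  have hne : toFn N g ≠ 0 := fun h => hg.ne_zero (by rw [← hofFn, h, map_zero])
  refine dBcode_eq_of_isLeast ⟨⟨toFn N g, hmem, hne, le_antisymm ?_ ?_⟩, ?_⟩
  · exact add_natDegree_le_hammingNorm_piB hg hgN hgb hbN hmem hne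
  · exact hammingNorm_piB_toFn_le hb N g
  · rintro _ ⟨c, hc, hc0, rfl⟩
    exact add_natDegree_le_hammingNorm_piB hg hgN hgb hbN hc hc0

lemma ofFn_repeat (q : ℕ) (x : Fin N → R) :
    ofFn (q * N) (Fin.repeat q x) = (∑ l ∈ Finset.range q, (X ^ N) ^ l) * ofFn N x := by
  simp_rw [ofFn_eq_sum_monomial, Finset.sum_range, Finset.sum_mul_sum,
    ← finProdFinEquiv.sum_comp, Fintype.sum_prod_type]
  refine Finset.sum_congr rfl fun l _ => Finset.sum_congr rfl fun t _ => ?_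
  have modNat_eq : (finProdFinEquiv (l, t)).modNat = t :=
    congrArg Prod.snd (finProdFinEquiv.symm_apply_apply (l, t))
  simp [monomial_mul_monomial, X_pow_eq_monomial, Fin.repeat_apply, modNat_eq, add_comm]

lemma cyclicCode_geom_sum_mul (hN : 0 < N) (hq : 0 < q) (g : R[X]) :
    (cyclicCode (q * N) ((∑ l ∈ Finset.range q, (X ^ N) ^ l) * g) : Set (Fin (q * N) → R)) =
      Fin.repeat q '' cyclicCode N g := by
  ext c
  simp only [SetLike.mem_coe, Set.mem_image, mem_cyclicCode]
  constructor
  · nontriviality R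
    rintro ⟨f, hf⟩
    rw [mul_assoc] at hf
    have hdeg : (g * f).natDegree < N := by
      have hlt := ofFn_natDegree_lt (Nat.mul_pos hq hN) c
      have hgeom := natDegree_geom_sum_X_pow_add R hN hq
      obtain hgf | hgf := eq_or_ne (g * f) 0
      · simpa [hgf] using hN
      · rw [hf, (monic_geom_sum_X_pow R hN hq).natDegree_mul' hgf] at hlt
        omega
    have hofFn : ofFn N (toFn N (g * f)) = g * f := ofFn_comp_toFn_eq_id_of_natDegree_lt hdeg
    refine ⟨toFn N (g * f), hofFn.symm ▸ dvd_mul_right g f, injective_ofFn _ ?_⟩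
    rw [ofFn_repeat, hofFn, hf]
  · rintro ⟨x, hx, rfl⟩
    rw [ofFn_repeat]
    exact mul_dvd_mul_left _ hx

theorem b_distance_high_degree_general (p : ℕ) [Fact p.Prime] [CharP R p] {e k i : ℕ} (hk : k ≤ e)
    (hb : 0 < b) (hbi : b + i ≤ p ^ (e - k)) (hib : i ≤ b) :
    dBcode b (cyclicCode (p ^ e) ((X - 1 : R[X]) ^ (p ^ e - p ^ (e - k) + i)) :
      Set (Fin (p ^ e) → R)) = p ^ k * (b + i) := by
  have : Nontrivial R := CharP.nontrivial_of_char_ne_one (Fact.out : p.Prime).ne_one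
  have hp (r : ℕ) : 0 < p ^ r := pow_pos (Fact.out : p.Prime).pos r
  have hlength : p ^ e = p ^ k * p ^ (e - k) := by rw [← pow_add, Nat.add_sub_cancel' hk]
  have hmonic : ((X - 1 : R[X]) ^ i).Monic := (monic_X_sub_C 1).pow i
  have hdeg : ((X - 1 : R[X]) ^ i).natDegree = i := by
    rw [← C_1, (monic_X_sub_C 1).natDegree_pow, natDegree_X_sub_C, mul_one]
  have hdvd : (X - 1 : R[X]) ^ i ∣ X ^ p ^ (e - k) - 1 :=
    X_sub_one_pow_dvd_X_pow_char_pow_sub_one R p (by omega)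
  rw [hlength, pow_add, ← geom_sum_X_pow_char_pow R p (e - k) k,
    cyclicCode_geom_sum_mul (hp _) (hp _), dBcode_image_repeat (hp _),
    dBcode_cyclicCode hmonic hdvd hb (by omega) (by omega), hdeg]

end CyclicCode

lemma Ccode_eq_cyclicCode (p m e : ℕ) [Fact p.Prime] [DecidableEq (GaloisField p m)] {i : ℕ}
    (hi : i ≤ p ^ e) :
    Ccode p m e i = cyclicCode (p ^ e) ((X - 1 : (GaloisField p m)[X]) ^ i) := by
  ext c
  have hdvd := X_sub_one_pow_dvd_X_pow_char_pow_sub_one (GaloisField p m) p hi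
  simp only [SetLike.mem_coe, mem_cyclicCode, Ccode, Set.mem_ofPred_eq, C_mul_X_pow_eq_monomial,
    ← ofFn_eq_sum_monomial]
  constructor
  · rintro ⟨f, hf⟩
    exact (dvd_sub_left (dvd_mul_right _ f)).1 (hdvd.trans hf)
  · rintro ⟨f, hf⟩
    exact ⟨f, by simp [hf]⟩

/-- For `e ≥ 2`, `1 ≤ k ≤ e-1`, `b ≥ 2`, and `0 ≤ i ≤ p^{e-k-1}` with
`b + i ≤ p^{e-k}` and `i ≤ b`, the cyclic code
`C_{p^e - p^{e-k} + i} = ⟨(x-1)^{p^e - p^{e-k} + i}⟩` satisfies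
`d_b(C_{p^e - p^{e-k} + i}) = p^k (b + i)`. -/
theorem b_distance_high_degree (p m e k : ℕ) [Fact p.Prime] (hm : 0 < m)
    (he : 2 ≤ e) (hk1 : 1 ≤ k) (hk2 : k ≤ e - 1) (b : ℕ) (hb2 : 2 ≤ b)
    (i : ℕ) (hi : i ≤ p ^ (e - k - 1)) (hbi : b + i ≤ p ^ (e - k))
    (hib : i ≤ b) :
    dBcode b (Ccode p m e (p ^ e - p ^ (e - k) + i)) = p ^ k * (b + i) := by
  classical
  have hle : p ^ (e - k) ≤ p ^ e := Nat.pow_le_pow_right (Fact.out : p.Prime).pos (Nat.sub_le e k)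
  rw [Ccode_eq_cyclicCode p m e (by omega)]
  exact b_distance_high_degree_general p (by omega) (by omega) hbi hib
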